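/- Let H = SO_{2n(i+1)+1}(F) with respect to w_{2n(i+1)+1}, and let γ₁ = diag(I_{ni−1}, [[1,0,0],[1,1,0],[−1/2,−1,1]], I_{ni−1}) regarded inside the middle SO_{2ni+1} block, embedded via h ↦ diag(I_n, h, I_n). Then γ₁ ∈ SO_{2ni+1}(F), and conjugation by α₀ h_{γ₁} maps the subgroup U¹ of elements of the form (6.19) of the paper (with z ∈ Z_n upper unitriangular and row vectors y₁, y₂) isomorphically onto the subgroup of elements of the form (6.20): [[I_{ni−1}, 0, y'₂],[0, 1, y'₁],[0, 0, z*]]^∧ — i.e. the stated matrix conjugation identity holds. -/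

import Mathlib

open Matrix

def wMat (F : Type*) [Field F] (k : ℕ) : Matrix (Fin k) (Fin k) F :=
  Matrix.of fun i j => if (i : ℕ) + (j : ℕ) + 1 = k then 1 else 0

def IsSO {F : Type*} [Field F] {m : ℕ} (g : Matrix (Fin m) (Fin m) F) : Prop :=
  gᵀ * wMat F m * g = wMat F m ∧ g.det = 1

/-- `z* = w_n ᵗz⁻¹ w_n`. -/
noncomputable def zStar (F : Type*) [Field F] (n : ℕ) (z : Matrix (Fin n) (Fin n) F) :
    Matrix (Fin n) (Fin n) F :=
  wMat F n * (z⁻¹)ᵀ * wMat F n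

/-- `γ₁ = diag(I_{ni−1}, [[1,0,0],[1,1,0],[−1/2,−1,1]], I_{ni−1})`, of size `2ni+1`. -/
def gammaOne (F : Type*) [Field F] (n i : ℕ) :
    Matrix (Fin (2 * (n * i) + 1)) (Fin (2 * (n * i) + 1)) F :=
  Matrix.of fun p q =>
    if (p : ℕ) = (q : ℕ) then 1
    else if (p : ℕ) = n * i ∧ (q : ℕ) + 1 = n * i then 1
    else if (p : ℕ) = n * i + 1 ∧ (q : ℕ) + 1 = n * i then -(2 : F)⁻¹
    else if (p : ℕ) = n * i + 1 ∧ (q : ℕ) = n * i then -1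
    else 0

/-- `h_{γ₁} = diag(I_n, γ₁, I_n)`, of size `2n(i+1)+1 = 2n + 2ni + 1`. -/
def hGammaOne (F : Type*) [Field F] (n i : ℕ) :
    Matrix (Fin (2 * n + 2 * (n * i) + 1)) (Fin (2 * n + 2 * (n * i) + 1)) F :=
  Matrix.of fun p q =>
    if (p : ℕ) = (q : ℕ) then 1
    else if (p : ℕ) = n + n * i ∧ (q : ℕ) + 1 = n + n * i then 1
    else if (p : ℕ) = n + n * i + 1 ∧ (q : ℕ) + 1 = n + n * i then -(2 : F)⁻¹
    else if (p : ℕ) = n + n * i + 1 ∧ (q : ℕ) = n + n * i then -1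
    else 0

/-- The element `α₀` of equation (6.6):
`[[0, I_{ni}, 0, 0, 0],[0, 0, 0, 0, I_n],[0, 0, (−1)^n, 0, 0],[I_n, 0, 0, 0, 0],
[0, 0, 0, I_{ni}, 0]]` with row-block sizes `ni, n, 1, n, ni` and column-block sizes
`n, ni, 1, ni, n`. -/
def alphaSix (F : Type*) [Field F] (n i : ℕ) :
    Matrix (Fin (2 * n + 2 * (n * i) + 1)) (Fin (2 * n + 2 * (n * i) + 1)) F :=
  Matrix.of fun p q =>
    if (p : ℕ) < n * i then (if (q : ℕ) = n + (p : ℕ) then 1 else 0)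
    else if (p : ℕ) < n * i + n then
      (if (q : ℕ) = n + 2 * (n * i) + 1 + ((p : ℕ) - n * i) then 1 else 0)
    else if (p : ℕ) = n * i + n then
      (if (q : ℕ) = n + n * i then ((-1 : F)) ^ n else 0)
    else if (p : ℕ) < n * i + 2 * n + 1 then
      (if (q : ℕ) + (n * i + n + 1) = (p : ℕ) then 1 else 0)
    else (if (q : ℕ) = n + n * i + 1 + ((p : ℕ) - (n * i + 2 * n + 1)) then 1 else 0)

/-- An element of `U¹` as in equation (6.19), with block row sizes
`n, ni−1, 1, 1, 1, ni−1, n`: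
`[[z, 0, −y₁/2, −y₁, y₁, y₂, 0],[0, I_{ni−1}, 0, 0, 0, 0, y₂'],[0,0,1,0,0,0, y₁'],
[0,0,0,1,0,0, −y₁'],[0,0,0,0,1,0, −y₁'/2],[0,0,0,0,0,I_{ni−1},0],[0,...,0, z*]]`. -/
noncomputable def uOne (F : Type*) [Field F] (n i : ℕ)
    (z : Matrix (Fin n) (Fin n) F) (y₁ : Fin n → F)
    (y₂ : Matrix (Fin n) (Fin (n * i - 1)) F)
    (y₁' : Fin n → F) (y₂' : Matrix (Fin (n * i - 1)) (Fin n) F) :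
    Matrix (Fin (2 * n + 2 * (n * i) + 1)) (Fin (2 * n + 2 * (n * i) + 1)) F :=
  Matrix.of fun p q =>
    if hp : (p : ℕ) < n then
      if hq : (q : ℕ) < n then z ⟨p, hp⟩ ⟨q, hq⟩
      else if (q : ℕ) + 1 = n + n * i then -(y₁ ⟨p, hp⟩) * (2 : F)⁻¹
      else if (q : ℕ) = n + n * i then -(y₁ ⟨p, hp⟩)
      else if (q : ℕ) = n + n * i + 1 then y₁ ⟨p, hp⟩
      else if hq2 : n + n * i + 2 ≤ (q : ℕ) ∧ (q : ℕ) < n + 2 * (n * i) + 1 then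
        y₂ ⟨p, hp⟩ ⟨(q : ℕ) - (n + n * i + 2), by omega⟩
      else 0
    else if hp2 : (p : ℕ) + 1 < n + n * i then
      if (q : ℕ) = (p : ℕ) then 1
      else if hq : n + 2 * (n * i) + 1 ≤ (q : ℕ) then
        y₂' ⟨(p : ℕ) - n, by omega⟩
          ⟨(q : ℕ) - (n + 2 * (n * i) + 1), by have := q.isLt; omega⟩
      else 0
    else if hp3 : (p : ℕ) + 1 = n + n * i then
      if (q : ℕ) = (p : ℕ) then 1
      else if hq : n + 2 * (n * i) + 1 ≤ (q : ℕ) then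
        y₁' ⟨(q : ℕ) - (n + 2 * (n * i) + 1), by have := q.isLt; omega⟩
      else 0
    else if hp4 : (p : ℕ) = n + n * i then
      if (q : ℕ) = (p : ℕ) then 1
      else if hq : n + 2 * (n * i) + 1 ≤ (q : ℕ) then
        -(y₁' ⟨(q : ℕ) - (n + 2 * (n * i) + 1), by have := q.isLt; omega⟩)
      else 0
    else if hp5 : (p : ℕ) = n + n * i + 1 then
      if (q : ℕ) = (p : ℕ) then 1
      else if hq : n + 2 * (n * i) + 1 ≤ (q : ℕ) then
        -(y₁' ⟨(q : ℕ) - (n + 2 * (n * i) + 1), by have := q.isLt; omega⟩) * (2 : F)⁻¹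
      else 0
    else if hp6 : (p : ℕ) < n + 2 * (n * i) + 1 then
      (if (q : ℕ) = (p : ℕ) then 1 else 0)
    else
      if hq : n + 2 * (n * i) + 1 ≤ (q : ℕ) then
        zStar F n z ⟨(p : ℕ) - (n + 2 * (n * i) + 1), by have := p.isLt; omega⟩
          ⟨(q : ℕ) - (n + 2 * (n * i) + 1), by have := q.isLt; omega⟩
      else 0

/-- `B = [[I_{ni−1}, 0, y₂'],[0, 1, y₁'],[0, 0, z*]]` of size `ni + n = n(i+1)`. -/
noncomputable def Bmat (F : Type*) [Field F] (n i : ℕ)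
    (z : Matrix (Fin n) (Fin n) F) (y₁' : Fin n → F)
    (y₂' : Matrix (Fin (n * i - 1)) (Fin n) F) :
    Matrix (Fin (n * i + n)) (Fin (n * i + n)) F :=
  Matrix.of fun p q =>
    if hp : (p : ℕ) + 1 < n * i then
      if (q : ℕ) = (p : ℕ) then 1
      else if hq : n * i ≤ (q : ℕ) then
        y₂' ⟨(p : ℕ), by omega⟩ ⟨(q : ℕ) - n * i, by have := q.isLt; omega⟩
      else 0
    else if hp2 : (p : ℕ) + 1 = n * i then
      if (q : ℕ) = (p : ℕ) then 1
      else if hq : n * i ≤ (q : ℕ) then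
        y₁' ⟨(q : ℕ) - n * i, by have := q.isLt; omega⟩
      else 0
    else
      if hq : n * i ≤ (q : ℕ) then
        zStar F n z ⟨(p : ℕ) - n * i, by have := p.isLt; omega⟩
          ⟨(q : ℕ) - n * i, by have := q.isLt; omega⟩
      else 0

/-- The element `B^∧ = diag(B, 1, B*)` of equation (6.20), with
`B* = w ᵗB⁻¹ w`. -/
noncomputable def hatMat (F : Type*) [Field F] (n i : ℕ)
    (z : Matrix (Fin n) (Fin n) F) (y₁' : Fin n → F)
    (y₂' : Matrix (Fin (n * i - 1)) (Fin n) F) :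
    Matrix (Fin (2 * n + 2 * (n * i) + 1)) (Fin (2 * n + 2 * (n * i) + 1)) F :=
  Matrix.of fun p q =>
    if hp : (p : ℕ) < n * i + n then
      if hq : (q : ℕ) < n * i + n then Bmat F n i z y₁' y₂' ⟨p, hp⟩ ⟨q, hq⟩ else 0
    else if hp2 : (p : ℕ) = n * i + n then
      (if (q : ℕ) = n * i + n then 1 else 0)
    else
      if hq : n * i + n + 1 ≤ (q : ℕ) then
        (wMat F (n * i + n) * ((Bmat F n i z y₁' y₂')⁻¹)ᵀ * wMat F (n * i + n))
          ⟨(p : ℕ) - (n * i + n + 1), by have := p.isLt; omega⟩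
          ⟨(q : ℕ) - (n * i + n + 1), by have := q.isLt; omega⟩
      else 0

/-!
Group the coordinates as `(n, ni) | 1 | (ni, n)`. Then `h_{γ₁}` is an Eichler transformation of the
form `w`, and conjugation by it clears all the entries `y₁, y₂, y₁', y₂'` of an element of `U¹`
outside the two blocks `X = (y₁ | y₂)` and `Y` (`y₂'` above `y₁'`) of the upper right corner. The
block permutation `α₀` carries the result to `diag(B, 1, C)` with `B = [[1, Y], [0, z*]]` and
`C = [[z, X], [0, 1]]`. All factors preserve `w`, so `diag(B, 1, C)` does too, and this forces
`C = B*`.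
-/

section ThreeBlocks

variable {R : Type*} {k₁ k₂ k₃ l₁ l₂ l₃ m₁ m₂ m₃ : Type*}

/-- A `3 × 3` block matrix, given row by row. -/
def threeBlocks (A₁₁ : Matrix k₁ l₁ R) (A₁₂ : Matrix k₁ l₂ R) (A₁₃ : Matrix k₁ l₃ R)
    (A₂₁ : Matrix k₂ l₁ R) (A₂₂ : Matrix k₂ l₂ R) (A₂₃ : Matrix k₂ l₃ R)
    (A₃₁ : Matrix k₃ l₁ R) (A₃₂ : Matrix k₃ l₂ R) (A₃₃ : Matrix k₃ l₃ R) :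
    Matrix (k₁ ⊕ k₂ ⊕ k₃) (l₁ ⊕ l₂ ⊕ l₃) R :=
  fromBlocks A₁₁ (fromCols A₁₂ A₁₃) (fromRows A₂₁ A₃₁) (fromBlocks A₂₂ A₂₃ A₃₂ A₃₃)

theorem threeBlocks_transpose (A₁₁ : Matrix k₁ l₁ R) (A₁₂ : Matrix k₁ l₂ R)
    (A₁₃ : Matrix k₁ l₃ R) (A₂₁ : Matrix k₂ l₁ R) (A₂₂ : Matrix k₂ l₂ R) (A₂₃ : Matrix k₂ l₃ R)
    (A₃₁ : Matrix k₃ l₁ R) (A₃₂ : Matrix k₃ l₂ R) (A₃₃ : Matrix k₃ l₃ R) :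
    (threeBlocks A₁₁ A₁₂ A₁₃ A₂₁ A₂₂ A₂₃ A₃₁ A₃₂ A₃₃)ᵀ =
      threeBlocks A₁₁ᵀ A₂₁ᵀ A₃₁ᵀ A₁₂ᵀ A₂₂ᵀ A₃₂ᵀ A₁₃ᵀ A₂₃ᵀ A₃₃ᵀ := by
  simp only [threeBlocks, fromBlocks_transpose, transpose_fromCols, transpose_fromRows]

theorem threeBlocks_mul [NonUnitalNonAssocSemiring R] [Fintype l₁] [Fintype l₂] [Fintype l₃]
    (A₁₁ : Matrix k₁ l₁ R) (A₁₂ : Matrix k₁ l₂ R) (A₁₃ : Matrix k₁ l₃ R)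
    (A₂₁ : Matrix k₂ l₁ R) (A₂₂ : Matrix k₂ l₂ R) (A₂₃ : Matrix k₂ l₃ R)
    (A₃₁ : Matrix k₃ l₁ R) (A₃₂ : Matrix k₃ l₂ R) (A₃₃ : Matrix k₃ l₃ R)
    (B₁₁ : Matrix l₁ m₁ R) (B₁₂ : Matrix l₁ m₂ R) (B₁₃ : Matrix l₁ m₃ R)
    (B₂₁ : Matrix l₂ m₁ R) (B₂₂ : Matrix l₂ m₂ R) (B₂₃ : Matrix l₂ m₃ R)
    (B₃₁ : Matrix l₃ m₁ R) (B₃₂ : Matrix l₃ m₂ R) (B₃₃ : Matrix l₃ m₃ R) :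
    threeBlocks A₁₁ A₁₂ A₁₃ A₂₁ A₂₂ A₂₃ A₃₁ A₃₂ A₃₃ *
        threeBlocks B₁₁ B₁₂ B₁₃ B₂₁ B₂₂ B₂₃ B₃₁ B₃₂ B₃₃ =
      threeBlocks
        (A₁₁ * B₁₁ + A₁₂ * B₂₁ + A₁₃ * B₃₁) (A₁₁ * B₁₂ + A₁₂ * B₂₂ + A₁₃ * B₃₂)
        (A₁₁ * B₁₃ + A₁₂ * B₂₃ + A₁₃ * B₃₃)
        (A₂₁ * B₁₁ + A₂₂ * B₂₁ + A₂₃ * B₃₁) (A₂₁ * B₁₂ + A₂₂ * B₂₂ + A₂₃ * B₃₂)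
        (A₂₁ * B₁₃ + A₂₂ * B₂₃ + A₂₃ * B₃₃)
        (A₃₁ * B₁₁ + A₃₂ * B₂₁ + A₃₃ * B₃₁) (A₃₁ * B₁₂ + A₃₂ * B₂₂ + A₃₃ * B₃₂)
        (A₃₁ * B₁₃ + A₃₂ * B₂₃ + A₃₃ * B₃₃) := by
  ext (i | i | i) (j | j | j) <;>
    simp [threeBlocks, mul_apply, Fintype.sum_sum_type, add_assoc]

end ThreeBlocks

theorem submatrix_equiv_inj {k l k' l' R : Type*} {A B : Matrix k l R} (e : k' ≃ k) (e' : l' ≃ l) :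
    A.submatrix e e' = B.submatrix e e' ↔ A = B :=
  (reindex e.symm e'.symm).injective.eq_iff (a := A) (b := B)

section PreservesForm

variable {R : Type*} [CommRing R] {ι κ ι' κ' : Type*} [Fintype ι]

theorem transpose_mul_mul_submatrix_equiv_iff [Fintype κ] {J : Matrix ι ι R} {J' : Matrix κ' κ' R}
    {g : Matrix ι κ' R} (e : κ ≃ ι) (e' : ι' ≃ κ') :
    (g.submatrix e e')ᵀ * J.submatrix e e * g.submatrix e e' = J'.submatrix e' e' ↔
      gᵀ * J * g = J' := by
  rw [transpose_submatrix, submatrix_mul_equiv _ _ _ e, submatrix_mul_equiv _ _ _ e,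
    submatrix_equiv_inj]

theorem mul_preserves_form {J g h : Matrix ι ι R} (hg : gᵀ * J * g = J) (hh : hᵀ * J * h = J) :
    (g * h)ᵀ * J * (g * h) = J := by
  calc (g * h)ᵀ * J * (g * h) = hᵀ * (gᵀ * J * g) * h := by
        simp only [transpose_mul, Matrix.mul_assoc]
    _ = J := by rw [hg, hh]

variable [DecidableEq ι]

theorem isUnit_of_preserves_form {J g : Matrix ι ι R} (hJ : J * J = 1) (hg : gᵀ * J * g = J) :
    IsUnit g :=
  IsUnit.of_mul_eq_one_right (J * gᵀ * J) <| by
    rw [Matrix.mul_assoc J, Matrix.mul_assoc J, hg, hJ]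

theorem preserves_form_of_mul_eq_mul {J P u v : Matrix ι ι R} (hPunit : IsUnit P)
    (hP : Pᵀ * J * P = J) (hu : uᵀ * J * u = J) (h : P * u = v * P) : vᵀ * J * v = J := by
  have hPT : IsUnit Pᵀ := (isUnit_transpose P).2 hPunit
  apply hPT.mul_left_cancel
  apply hPunit.mul_right_cancel
  calc Pᵀ * (vᵀ * J * v) * P = (v * P)ᵀ * J * (v * P) := by
        simp only [transpose_mul, Matrix.mul_assoc]
    _ = J := by rw [← h]; exact mul_preserves_form hP hu
    _ = Pᵀ * J * P := hP.symm

end PreservesForm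

section SplitForm

variable {R : Type*} [CommRing R] {κ κ' : Type*}

/-- The symmetric bilinear form on `R^κ ⊕ R ⊕ R^κ'` that pairs the outer summands by `W` and
restricts to `x ↦ x²` on the line in the middle. -/
def splitForm (W : Matrix κ κ' R) : Matrix (κ ⊕ Fin 1 ⊕ κ') (κ ⊕ Fin 1 ⊕ κ') R :=
  threeBlocks 0 0 W 0 1 0 Wᵀ 0 0

/-- The block diagonal matrix `diag(B, 1, C)`. -/
def leviBlocks (B : Matrix κ κ R) (C : Matrix κ' κ' R) :
    Matrix (κ ⊕ Fin 1 ⊕ κ') (κ ⊕ Fin 1 ⊕ κ') R :=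
  threeBlocks B 0 0 0 1 0 0 0 C

/-- The Eichler (Siegel) transformation `[[1, 0, 0], [r, 1, 0], [-s c r, -c, 1]]` of a split form;
`s` stands for `1/2`. -/
def eichler [DecidableEq κ] [DecidableEq κ'] (s : R) (r : Matrix (Fin 1) κ R)
    (c : Matrix κ' (Fin 1) R) : Matrix (κ ⊕ Fin 1 ⊕ κ') (κ ⊕ Fin 1 ⊕ κ') R :=
  threeBlocks 1 0 0 r 1 0 (-s • (c * r)) (-c) 1

theorem neg_smul_add_self_add_neg_smul {M : Type*} [AddCommGroup M] [Module R M] {s : R}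
    (hs : s + s = 1) (x : M) : -(s • x) + x + -(s • x) = 0 := by
  calc -(s • x) + x + -(s • x) = (1 - (s + s)) • x := by module
    _ = 0 := by rw [hs, sub_self, zero_smul]

variable [Fintype κ] [DecidableEq κ] [Fintype κ'] [DecidableEq κ']

theorem eichler_preserves_splitForm {s : R} (hs : s + s = 1) {W : Matrix κ κ' R}
    {r : Matrix (Fin 1) κ R} {c : Matrix κ' (Fin 1) R} (hc : W * c = rᵀ) :
    (eichler s r c)ᵀ * splitForm W * eichler s r c = splitForm W := by
  have hr : cᵀ * Wᵀ = r := by rw [← transpose_mul, hc, transpose_transpose]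
  have hcr : W * (c * r) = rᵀ * r := by rw [← Matrix.mul_assoc, hc]
  simp [eichler, splitForm, threeBlocks_transpose, threeBlocks_mul, Matrix.mul_assoc, hr, hc, hcr,
    neg_smul_add_self_add_neg_smul hs]

theorem det_eichler (s : R) (r : Matrix (Fin 1) κ R) (c : Matrix κ' (Fin 1) R) :
    (eichler s r c).det = 1 := by
  simp [eichler, threeBlocks, det_fromBlocks_zero₁₂]

theorem eq_of_leviBlocks_preserves_splitForm {W : Matrix κ κ' R} (hW : W * Wᵀ = 1)
    (hW' : Wᵀ * W = 1) {B : Matrix κ κ R} {C : Matrix κ' κ' R}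
    (h : (leviBlocks B C)ᵀ * splitForm W * leviBlocks B C = splitForm W) :
    C = Wᵀ * (B⁻¹)ᵀ * W := by
  have hBC : Bᵀ * W * C = W := by
    simp only [leviBlocks, splitForm, threeBlocks_transpose, threeBlocks_mul] at h
    ext i j
    simpa [threeBlocks] using congr_fun₂ h (Sum.inl i) (Sum.inr (Sum.inr j))
  have hinv : (Bᵀ)⁻¹ = W * C * Wᵀ := by
    apply inv_eq_right_inv
    rw [← Matrix.mul_assoc, ← Matrix.mul_assoc, hBC, hW]
  calc C = Wᵀ * W * C * (Wᵀ * W) := by rw [hW', Matrix.one_mul, Matrix.mul_one]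
    _ = Wᵀ * (B⁻¹)ᵀ * W := by rw [transpose_nonsing_inv, hinv]; simp only [Matrix.mul_assoc]

end SplitForm

section FiveBlocks

variable {R : Type*} [CommRing R] {ι κ : Type*} [DecidableEq κ] [DecidableEq ι]

variable (ι κ) in
/-- The Weyl element `α₀` in block form: a signed permutation of the blocks `ι, κ, 1, κ, ι`,
with `ε` in the middle. -/
def blockPerm (ε : R) : Matrix ((κ ⊕ ι) ⊕ Fin 1 ⊕ (ι ⊕ κ)) ((ι ⊕ κ) ⊕ Fin 1 ⊕ (κ ⊕ ι)) R :=
  threeBlocks (fromBlocks 0 1 0 0) 0 (fromBlocks 0 0 0 1) 0 (ε • 1) 0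
    (fromBlocks 1 0 0 0) 0 (fromBlocks 0 0 1 0)

/-- The conjugate of a `shearedBlocks` element by the Eichler transformation: the blocks
`z, 1, 1, 1, t` on the diagonal, and off the diagonal only `X` and `Y`. -/
def straightBlocks (z t : Matrix ι ι R) (X : Matrix ι κ R) (Y : Matrix κ ι R) :
    Matrix ((ι ⊕ κ) ⊕ Fin 1 ⊕ (κ ⊕ ι)) ((ι ⊕ κ) ⊕ Fin 1 ⊕ (κ ⊕ ι)) R :=
  threeBlocks (fromBlocks z 0 0 1) 0 (fromBlocks X 0 0 Y) 0 1 0 0 0 (fromBlocks 1 0 0 t)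

variable [Fintype κ]

/-- The elements (6.19) of `U¹` in block form, with `X = (y₁ | y₂)` and `Y` the column of `y₂'`
and `y₁'`; the entries `y₁` and `y₁'` are extracted as `X * c` and `r * Y`. -/
def shearedBlocks (s : R) (r : Matrix (Fin 1) κ R) (c : Matrix κ (Fin 1) R) (z t : Matrix ι ι R)
    (X : Matrix ι κ R) (Y : Matrix κ ι R) :
    Matrix ((ι ⊕ κ) ⊕ Fin 1 ⊕ (κ ⊕ ι)) ((ι ⊕ κ) ⊕ Fin 1 ⊕ (κ ⊕ ι)) R :=
  threeBlocks
    (fromBlocks z (-s • (X * c * r)) 0 1) (fromRows (-(X * c)) 0) (fromBlocks X 0 0 Y)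
    0 1 (fromCols 0 (-(r * Y)))
    0 0 (fromBlocks 1 (-s • (c * (r * Y))) 0 t)

variable [Fintype ι]

theorem blockPerm_preserves_splitForm {ε : R} (hε : ε * ε = 1) {U : Matrix ι ι R}
    {W : Matrix κ κ R} (hU : Uᵀ = U) (hW : Wᵀ = W) :
    (blockPerm ι κ ε)ᵀ * splitForm (fromBlocks 0 W U 0) * blockPerm ι κ ε =
      splitForm (fromBlocks 0 U W 0) := by
  simp [blockPerm, splitForm, threeBlocks_transpose, threeBlocks_mul, fromBlocks_multiply,
    fromBlocks_transpose, fromBlocks_add, hU, hW, smul_smul, hε]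

theorem eichler_mul_shearedBlocks {s : R} (hs : s + s = 1) (r : Matrix (Fin 1) κ R)
    (c : Matrix κ (Fin 1) R) (z t : Matrix ι ι R) (X : Matrix ι κ R) (Y : Matrix κ ι R) :
    eichler s (fromCols 0 r) (fromRows c 0) * shearedBlocks s r c z t X Y =
      straightBlocks z t X Y * eichler s (fromCols 0 r) (fromRows c 0) := by
  simp only [shearedBlocks, straightBlocks, eichler, threeBlocks_mul]
  congr 1
  case e_A₂₃ => ext i (j | j) <;> simp [fromCols_mul_fromBlocks]
  all_goals
    simp [-fromRows_mul, -mul_fromCols, fromRows_mul_fromCols, fromBlocks_mul_fromRows,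
      fromCols_mul_fromRows, fromCols_mul_fromBlocks, fromBlocks_multiply, fromBlocks_smul,
      fromBlocks_neg, fromBlocks_add, Matrix.mul_assoc, neg_smul_add_self_add_neg_smul hs]

theorem blockPerm_mul_straightBlocks (ε : R) (z t : Matrix ι ι R) (X : Matrix ι κ R)
    (Y : Matrix κ ι R) :
    blockPerm ι κ ε * straightBlocks z t X Y =
      leviBlocks (fromBlocks 1 Y 0 t) (fromBlocks z X 0 1) * blockPerm ι κ ε := by
  simp [straightBlocks, blockPerm, leviBlocks, threeBlocks_mul, fromBlocks_multiply,
    fromBlocks_add]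

theorem blockPerm_mul_eichler_mul_shearedBlocks {s : R} (hs : s + s = 1) (ε : R)
    (r : Matrix (Fin 1) κ R) (c : Matrix κ (Fin 1) R) (z t : Matrix ι ι R) (X : Matrix ι κ R)
    (Y : Matrix κ ι R) :
    blockPerm ι κ ε * eichler (κ := ι ⊕ κ) (κ' := κ ⊕ ι) s (fromCols 0 r) (fromRows c 0) *
        shearedBlocks s r c z t X Y =
      leviBlocks (fromBlocks 1 Y 0 t) (fromBlocks z X 0 1) * blockPerm ι κ ε *
        eichler (κ := ι ⊕ κ) (κ' := κ ⊕ ι) s (fromCols 0 r) (fromRows c 0) := by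
  rw [Matrix.mul_assoc, eichler_mul_shearedBlocks hs, ← Matrix.mul_assoc,
    blockPerm_mul_straightBlocks]

end FiveBlocks

section Coordinates

/-- `Fin k` cut into an initial segment of length `a` and a final segment of length `b`. -/
def sumEquiv {a b k : ℕ} (h : a + b = k) : Fin a ⊕ Fin b ≃ Fin k :=
  finSumFinEquiv.trans (finCongr h)

/-- `Fin N` with `N = 2k + 1` cut into two segments of length `k` around the middle index, the
segments being indexed through `e` and `e'`. -/
def palindromeEquiv {κ κ' : Type*} {k N : ℕ} (e : κ ≃ Fin k) (e' : κ' ≃ Fin k)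
    (h : k + (1 + k) = N) : κ ⊕ Fin 1 ⊕ κ' ≃ Fin N :=
  (Equiv.sumCongr e ((Equiv.sumCongr (Equiv.refl _) e').trans (sumEquiv rfl))).trans (sumEquiv h)

/-- `Fin N` cut into consecutive segments of lengths `a, b, 1, b, a`. -/
abbrev fiveSegmentsEquiv {a b N : ℕ} (h : a + b + (1 + (a + b)) = N) :
    (Fin a ⊕ Fin b) ⊕ Fin 1 ⊕ (Fin b ⊕ Fin a) ≃ Fin N :=
  palindromeEquiv (sumEquiv rfl) (sumEquiv (Nat.add_comm b a)) h

/-- The segments `n, m, 1, m, n`, which label the columns of `α₀` for `m = ni`. -/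
abbrev colEquiv (n m : ℕ) :
    (Fin n ⊕ Fin m) ⊕ Fin 1 ⊕ (Fin m ⊕ Fin n) ≃ Fin (2 * n + 2 * m + 1) :=
  fiveSegmentsEquiv (by omega)

/-- The segments `m, n, 1, n, m`, which label the rows of `α₀` for `m = ni`. -/
abbrev rowEquiv (n m : ℕ) :
    (Fin m ⊕ Fin n) ⊕ Fin 1 ⊕ (Fin n ⊕ Fin m) ≃ Fin (2 * n + 2 * m + 1) :=
  fiveSegmentsEquiv (by omega)

@[simp]
theorem val_sumEquiv_inl {a b k : ℕ} (h : a + b = k) (x : Fin a) :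
    (sumEquiv h (Sum.inl x) : ℕ) = x := by
  simp [sumEquiv]

@[simp]
theorem val_sumEquiv_inr {a b k : ℕ} (h : a + b = k) (x : Fin b) :
    (sumEquiv h (Sum.inr x) : ℕ) = a + x := by
  simp [sumEquiv]

variable {κ κ' : Type*} {k N : ℕ} (e : κ ≃ Fin k) (e' : κ' ≃ Fin k) (h : k + (1 + k) = N)

@[simp]
theorem val_palindromeEquiv_inl (x : κ) : (palindromeEquiv e e' h (Sum.inl x) : ℕ) = e x := by
  simp [palindromeEquiv]

@[simp]
theorem val_palindromeEquiv_inr_inl (x : Fin 1) :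
    (palindromeEquiv e e' h (Sum.inr (Sum.inl x)) : ℕ) = k := by
  simp [palindromeEquiv]

@[simp]
theorem val_palindromeEquiv_inr_inr (x : κ') :
    (palindromeEquiv e e' h (Sum.inr (Sum.inr x)) : ℕ) = k + 1 + e' x := by
  simp [palindromeEquiv, add_assoc]

end Coordinates

section AntidiagonalForm

variable (F : Type*) [Field F]

theorem wMat_transpose (k : ℕ) : (wMat F k)ᵀ = wMat F k := by
  ext i j
  simp [wMat, add_comm]

variable {F} in
theorem wMat_mul_apply {k : ℕ} {κ : Type*} (M : Matrix (Fin k) κ F) (p : Fin k) (q : κ) :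
    (wMat F k * M) p q = M p.rev q := by
  have hrev (x : Fin k) : (p : ℕ) + x + 1 = k ↔ x = p.rev := by
    rw [Fin.ext_iff, Fin.val_rev]
    omega
  simp [mul_apply, wMat, hrev]

theorem wMat_mul_self (k : ℕ) : wMat F k * wMat F k = 1 := by
  ext p q
  rw [wMat_mul_apply]
  simp only [wMat, of_apply, Fin.val_rev, one_apply, Fin.ext_iff]
  congr 1
  grind

theorem wMat_submatrix_palindromeEquiv {κ κ' : Type*} {k N : ℕ} (e : κ ≃ Fin k) (e' : κ' ≃ Fin k)
    (h : k + (1 + k) = N) :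
    (wMat F N).submatrix (palindromeEquiv e e' h) (palindromeEquiv e e' h) =
      splitForm ((wMat F k).submatrix e e') := by
  ext (p | p | p) (q | q | q) <;> simp [wMat, splitForm, threeBlocks, one_apply] <;> grind

theorem wMat_submatrix_sumEquiv {a b k : ℕ} (hab : a + b = k) (hba : b + a = k) :
    (wMat F k).submatrix (sumEquiv hab) (sumEquiv hba) = fromBlocks 0 (wMat F a) (wMat F b) 0 := by
  ext (p | p) (q | q) <;> simp [wMat] <;> grind

theorem wMat_submatrix_fiveSegmentsEquiv {a b N : ℕ} (h : a + b + (1 + (a + b)) = N) :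
    (wMat F N).submatrix (fiveSegmentsEquiv h) (fiveSegmentsEquiv h) =
      splitForm (fromBlocks 0 (wMat F a) (wMat F b) 0) := by
  rw [wMat_submatrix_palindromeEquiv, wMat_submatrix_sumEquiv]

end AntidiagonalForm

section Entries

variable (F : Type*) [Field F]

/-- The row vector `(0, …, 0, 1)`. -/
def lastRow (m : ℕ) : Matrix (Fin 1) (Fin m) F :=
  of fun _ q => if (q : ℕ) + 1 = m then 1 else 0

/-- The column vector with entries `1, 0, …, 0`. -/
def firstCol (m : ℕ) : Matrix (Fin m) (Fin 1) F :=
  of fun p _ => if (p : ℕ) = 0 then 1 else 0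

theorem wMat_mul_firstCol (m : ℕ) : wMat F m * firstCol F m = (lastRow F m)ᵀ := by
  ext p q
  rw [wMat_mul_apply]
  simp only [firstCol, lastRow, of_apply, transpose_apply, Fin.val_rev]
  congr 1
  grind

theorem gammaOne_submatrix (n i : ℕ) :
    (gammaOne F n i).submatrix (palindromeEquiv (Equiv.refl _) (Equiv.refl _) (by omega))
        (palindromeEquiv (Equiv.refl _) (Equiv.refl _) (by omega)) =
      eichler (2 : F)⁻¹ (lastRow F (n * i)) (firstCol F (n * i)) := by
  ext (p | p | p) (q | q | q) <;>
    simp [gammaOne, eichler, threeBlocks, one_apply, lastRow, firstCol, mul_apply] <;> grind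

theorem alphaSix_submatrix (n i : ℕ) :
    (alphaSix F n i).submatrix (rowEquiv n (n * i)) (colEquiv n (n * i)) =
      blockPerm (Fin n) (Fin (n * i)) ((-1 : F) ^ n) := by
  ext ((p | p) | p | (p | p)) ((q | q) | q | (q | q)) <;>
    simp [alphaSix, blockPerm, threeBlocks, one_apply] <;> grind

theorem hGammaOne_submatrix {n i : ℕ} (hm : 1 ≤ n * i) :
    (hGammaOne F n i).submatrix (colEquiv n (n * i)) (colEquiv n (n * i)) =
      eichler (2 : F)⁻¹ (fromCols 0 (lastRow F (n * i))) (fromRows (firstCol F (n * i)) 0) := by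
  ext ((p | p) | p | (p | p)) ((q | q) | q | (q | q)) <;>
    simp [hGammaOne, eichler, threeBlocks, one_apply, lastRow, firstCol, mul_apply] <;> grind

variable {F}

/-- The matrix `(y | Y)`, whose first column is `y`. -/
def consCol {n m : ℕ} (y : Fin n → F) (Y : Matrix (Fin n) (Fin (m - 1)) F) :
    Matrix (Fin n) (Fin m) F :=
  of fun p q => if h : (q : ℕ) = 0 then y p else Y p ⟨q - 1, by omega⟩

/-- The matrix with the rows of `Y` followed by the row `y`. -/
def snocRow {n m : ℕ} (Y : Matrix (Fin (m - 1)) (Fin n) F) (y : Fin n → F) :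
    Matrix (Fin m) (Fin n) F :=
  of fun p q => if h : (p : ℕ) + 1 < m then Y ⟨p, by omega⟩ q else y q

theorem consCol_mul_firstCol {n m : ℕ} (hm : 1 ≤ m) (y : Fin n → F)
    (Y : Matrix (Fin n) (Fin (m - 1)) F) :
    consCol y Y * firstCol F m = replicateCol (Fin 1) y := by
  have hzero (x : Fin m) : (x : ℕ) = 0 ↔ x = ⟨0, hm⟩ := by rw [Fin.ext_iff]
  ext p q
  simp [mul_apply, consCol, firstCol, hzero]

theorem lastRow_mul_snocRow {n m : ℕ} (hm : 1 ≤ m) (Y : Matrix (Fin (m - 1)) (Fin n) F)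
    (y : Fin n → F) : lastRow F m * snocRow Y y = replicateRow (Fin 1) y := by
  have hlast (x : Fin m) : (x : ℕ) + 1 = m ↔ x = ⟨m - 1, by omega⟩ := by
    simp only [Fin.ext_iff]
    omega
  have hrow (q : Fin n) : snocRow Y y ⟨m - 1, by omega⟩ q = y q := by
    simp [snocRow, Nat.sub_add_cancel hm]
  ext p q
  simp [mul_apply, lastRow, hlast, hrow]

variable {n i : ℕ} (z : Matrix (Fin n) (Fin n) F) (y₁ : Fin n → F)
  (y₂ : Matrix (Fin n) (Fin (n * i - 1)) F) (y₁' : Fin n → F)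
  (y₂' : Matrix (Fin (n * i - 1)) (Fin n) F)

set_option maxHeartbeats 500000 in
-- All 25 blocks are compared with the sevenfold case distinction in `uOne`.
theorem uOne_submatrix (hm : 1 ≤ n * i) :
    (uOne F n i z y₁ y₂ y₁' y₂').submatrix (colEquiv n (n * i)) (colEquiv n (n * i)) =
      shearedBlocks (2 : F)⁻¹ (lastRow F (n * i)) (firstCol F (n * i)) z (zStar F n z)
        (consCol y₁ y₂) (snocRow y₂' y₁') := by
  simp only [shearedBlocks, consCol_mul_firstCol hm, lastRow_mul_snocRow hm]
  ext ((p | p) | p | (p | p)) ((q | q) | q | (q | q)) <;>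
    simp [uOne, threeBlocks, one_apply, lastRow, firstCol, mul_apply, consCol, snocRow] <;> grind

theorem Bmat_submatrix :
    (Bmat F n i z y₁' y₂').submatrix (sumEquiv rfl) (sumEquiv rfl) =
      fromBlocks 1 (snocRow y₂' y₁') 0 (zStar F n z) := by
  ext (p | p) (q | q) <;> simp [Bmat, one_apply, snocRow] <;> grind

theorem hatMat_submatrix :
    (hatMat F n i z y₁' y₂').submatrix (rowEquiv n (n * i)) (rowEquiv n (n * i)) =
      leviBlocks ((Bmat F n i z y₁' y₂').submatrix (sumEquiv rfl) (sumEquiv rfl))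
        ((wMat F (n * i + n) * ((Bmat F n i z y₁' y₂')⁻¹)ᵀ * wMat F (n * i + n)).submatrix
          (sumEquiv (Nat.add_comm n _)) (sumEquiv (Nat.add_comm n _))) := by
  ext (p | p | p) (q | q | q) <;> simp [hatMat, leviBlocks, threeBlocks, one_apply] <;> grind

end Entries

section Orthogonality

variable {F : Type*} [Field F]

theorem inv_two_add_inv_two (h2 : (2 : F) ≠ 0) : (2 : F)⁻¹ + 2⁻¹ = 1 := by
  rw [← two_mul, mul_inv_cancel₀ h2]

theorem isSO_gammaOne (h2 : (2 : F) ≠ 0) (n i : ℕ) : IsSO (gammaOne F n i) := by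
  let e := palindromeEquiv (Equiv.refl (Fin (n * i))) (Equiv.refl _)
    (show n * i + (1 + n * i) = 2 * (n * i) + 1 by omega)
  constructor
  · rw [← transpose_mul_mul_submatrix_equiv_iff e e, gammaOne_submatrix,
      wMat_submatrix_palindromeEquiv]
    exact eichler_preserves_splitForm (inv_two_add_inv_two h2) (wMat_mul_firstCol F _)
  · rw [← det_submatrix_equiv_self e, gammaOne_submatrix, det_eichler]

theorem hGammaOne_preserves_wMat (h2 : (2 : F) ≠ 0) {n i : ℕ} (hm : 1 ≤ n * i) :
    (hGammaOne F n i)ᵀ * wMat F _ * hGammaOne F n i = wMat F _ := by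
  rw [← transpose_mul_mul_submatrix_equiv_iff (colEquiv n (n * i)) (colEquiv n (n * i)),
    hGammaOne_submatrix F hm, wMat_submatrix_fiveSegmentsEquiv]
  apply eichler_preserves_splitForm (inv_two_add_inv_two h2)
  simp [fromBlocks_mul_fromRows, transpose_fromCols, wMat_mul_firstCol]

theorem alphaSix_preserves_wMat (n i : ℕ) :
    (alphaSix F n i)ᵀ * wMat F _ * alphaSix F n i = wMat F _ := by
  rw [← transpose_mul_mul_submatrix_equiv_iff (rowEquiv n (n * i)) (colEquiv n (n * i)),
    alphaSix_submatrix, wMat_submatrix_fiveSegmentsEquiv, wMat_submatrix_fiveSegmentsEquiv]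
  exact blockPerm_preserves_splitForm (by rw [← mul_pow, neg_one_mul, neg_neg, one_pow])
    (wMat_transpose F n) (wMat_transpose F (n * i))

variable {n i : ℕ} {z : Matrix (Fin n) (Fin n) F} {y₁ : Fin n → F}
  {y₂ : Matrix (Fin n) (Fin (n * i - 1)) F} {y₁' : Fin n → F}
  {y₂' : Matrix (Fin (n * i - 1)) (Fin n) F}
  {D : Matrix (Fin (2 * n + 2 * (n * i) + 1)) (Fin (2 * n + 2 * (n * i) + 1)) F}

theorem alphaSix_mul_hGammaOne_mul_uOne (h2 : (2 : F) ≠ 0) (hm : 1 ≤ n * i)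
    (hD : D.submatrix (rowEquiv n (n * i)) (rowEquiv n (n * i)) =
      leviBlocks ((Bmat F n i z y₁' y₂').submatrix (sumEquiv rfl) (sumEquiv rfl))
        (fromBlocks z (consCol y₁ y₂) 0 1)) :
    alphaSix F n i * hGammaOne F n i * uOne F n i z y₁ y₂ y₁' y₂' =
      D * (alphaSix F n i * hGammaOne F n i) := by
  have key := blockPerm_mul_eichler_mul_shearedBlocks (inv_two_add_inv_two h2) ((-1 : F) ^ n)
    (lastRow F (n * i)) (firstCol F (n * i)) z (zStar F n z) (consCol y₁ y₂) (snocRow y₂' y₁')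
  rw [← alphaSix_submatrix, ← hGammaOne_submatrix F hm, ← uOne_submatrix z y₁ y₂ y₁' y₂' hm,
    ← Bmat_submatrix, ← hD] at key
  simp only [submatrix_mul_equiv, submatrix_equiv_inj] at key
  rw [key, Matrix.mul_assoc]

theorem eq_hatMat_of_preserves_wMat {C : Matrix (Fin n ⊕ Fin (n * i)) (Fin n ⊕ Fin (n * i)) F}
    (hD : D.submatrix (rowEquiv n (n * i)) (rowEquiv n (n * i)) =
      leviBlocks ((Bmat F n i z y₁' y₂').submatrix (sumEquiv rfl) (sumEquiv rfl)) C)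
    (h : Dᵀ * wMat F _ * D = wMat F _) : D = hatMat F n i z y₁' y₂' := by
  rw [← transpose_mul_mul_submatrix_equiv_iff (rowEquiv n (n * i)) (rowEquiv n (n * i)), hD,
    wMat_submatrix_palindromeEquiv] at h
  have hC := eq_of_leviBlocks_preserves_splitForm
    (by simp [wMat_transpose, wMat_mul_self]) (by simp [wMat_transpose, wMat_mul_self]) h
  rw [← submatrix_equiv_inj (rowEquiv n (n * i)) (rowEquiv n (n * i)), hD,
    hatMat_submatrix, hC, inv_submatrix_equiv, transpose_submatrix, transpose_submatrix,
    submatrix_mul_equiv, submatrix_mul_equiv, wMat_transpose]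

end Orthogonality

theorem gammaOne_conjugation_general (F : Type*) [Field F] (h2 : (2 : F) ≠ 0)
    (n i : ℕ) (hm : 1 ≤ n * i) :
    IsSO (gammaOne F n i) ∧
    ∀ (z : Matrix (Fin n) (Fin n) F) (y₁ : Fin n → F)
      (y₂ : Matrix (Fin n) (Fin (n * i - 1)) F)
      (y₁' : Fin n → F) (y₂' : Matrix (Fin (n * i - 1)) (Fin n) F),
      (uOne F n i z y₁ y₂ y₁' y₂')ᵀ * wMat F _ * uOne F n i z y₁ y₂ y₁' y₂' = wMat F _ →
      alphaSix F n i * hGammaOne F n i * uOne F n i z y₁ y₂ y₁' y₂' *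
          (alphaSix F n i * hGammaOne F n i)⁻¹
        = hatMat F n i z y₁' y₂' := by
  refine ⟨isSO_gammaOne h2 n i, fun z y₁ y₂ y₁' y₂' hu => ?_⟩
  set P := alphaSix F n i * hGammaOne F n i
  have hP : Pᵀ * wMat F _ * P = wMat F _ :=
    mul_preserves_form (alphaSix_preserves_wMat n i) (hGammaOne_preserves_wMat h2 hm)
  have hPunit : IsUnit P := isUnit_of_preserves_form (wMat_mul_self F _) hP
  obtain ⟨D, hD⟩ : ∃ D : Matrix (Fin (2 * n + 2 * (n * i) + 1)) _ F,
      D.submatrix (rowEquiv n (n * i)) (rowEquiv n (n * i)) =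
        leviBlocks ((Bmat F n i z y₁' y₂').submatrix (sumEquiv rfl) (sumEquiv rfl))
          (fromBlocks z (consCol y₁ y₂) 0 1) :=
    (reindex (rowEquiv n (n * i)).symm (rowEquiv n (n * i)).symm).surjective _
  have hPu : P * uOne F n i z y₁ y₂ y₁' y₂' = D * P := alphaSix_mul_hGammaOne_mul_uOne h2 hm hD
  calc P * uOne F n i z y₁ y₂ y₁' y₂' * P⁻¹ = D := by
        rw [hPu, mul_nonsing_inv_cancel_right _ _ ((isUnit_iff_isUnit_det P).1 hPunit)]
    _ = hatMat F n i z y₁' y₂' :=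
        eq_hatMat_of_preserves_wMat hD (preserves_form_of_mul_eq_mul hPunit hP hu hPu)

/-- `γ₁ ∈ SO_{2ni+1}(F)`, and conjugation by `α₀ h_{γ₁}` carries the
elements of `U¹` (equation (6.19)) to the elements of equation (6.20). -/
theorem gammaOne_conjugation (F : Type*) [Field F] (h2 : (2 : F) ≠ 0)
    (n i : ℕ) (hn : 1 ≤ n) (hi : 1 ≤ i) :
    IsSO (gammaOne F n i) ∧
    ∀ (z : Matrix (Fin n) (Fin n) F) (y₁ : Fin n → F)
      (y₂ : Matrix (Fin n) (Fin (n * i - 1)) F)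
      (y₁' : Fin n → F) (y₂' : Matrix (Fin (n * i - 1)) (Fin n) F),
      (∀ p : Fin n, z p p = 1) →
      (∀ p q : Fin n, (q : ℕ) < (p : ℕ) → z p q = 0) →
      IsSO (uOne F n i z y₁ y₂ y₁' y₂') →
      alphaSix F n i * hGammaOne F n i * uOne F n i z y₁ y₂ y₁' y₂' *
          (alphaSix F n i * hGammaOne F n i)⁻¹
        = hatMat F n i z y₁' y₂' := by
  obtain ⟨hγ, hconj⟩ := gammaOne_conjugation_general F h2 n i (Nat.mul_pos hn hi)
  exact ⟨hγ, fun z y₁ y₂ y₁' y₂' _ _ hu => hconj z y₁ y₂ y₁' y₂' hu.1⟩
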